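/- arXiv:math/0203097 — 10 statements merged into one kernel-verified Lean document; each statement's English description precedes it below -/
import Mathlib

section
/- Assume dim E₊ = dim E₋. Then the assignment sending a unitary isomorphism φ : E₊ → E₋ to its graph {x + φ(x) : x ∈ E₊} is a bijection from the set of unitary (linear isometric) isomorphisms E₊ → E₋ onto the set of Lagrangian subspaces of H. In particular, every Lagrangian subspace W of H is the graph of a unique unitary isomorphism φ(W) : E₊ → E₋. -/
/-- Assume `dim E₊ = dim E₋`.  Then sending a unitary isomorphism
`φ : E₊ → E₋` to its graph `{x + φ x | x ∈ E₊}` is a bijection from the set of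
unitary isomorphisms `E₊ ≃ E₋` onto the set of Lagrangian subspaces of `H`:
every graph is a Lagrangian subspace, and every Lagrangian subspace `W` is the
graph of a unique unitary isomorphism `φ(W) : E₊ → E₋`. -/
theorem stmt_2
    (H : Type*) [NormedAddCommGroup H] [InnerProductSpace ℂ H] [FiniteDimensional ℂ H]
    (γ : H →ₗ[ℂ] H)
    (hγ_unitary : ∀ x y : H, (inner ℂ (γ x) (γ y) : ℂ) = inner ℂ x y)
    (hγ_sq : ∀ x : H, γ (γ x) = -x)
    (Ep Em : Submodule ℂ H)
    (hEp : Ep = LinearMap.ker (γ - Complex.I • LinearMap.id))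
    (hEm : Em = LinearMap.ker (γ + Complex.I • LinearMap.id))
    (hdim : Module.finrank ℂ ↥Ep = Module.finrank ℂ ↥Em) :
    -- the graph of each unitary isomorphism `E₊ → E₋` is a Lagrangian subspace
    (∀ φ : ↥Ep ≃ₗᵢ[ℂ] ↥Em, ∃ W : Submodule ℂ H,
        W.map γ = Wᗮ ∧ (∀ v : H, v ∈ W ↔ ∃ x : ↥Ep, v = (x : H) + ((φ x : ↥Em) : H))) ∧
    -- every Lagrangian subspace is the graph of a unique unitary isomorphism
    (∀ W : Submodule ℂ H, W.map γ = Wᗮ →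
        ∃! φ : ↥Ep ≃ₗᵢ[ℂ] ↥Em,
          ∀ v : H, v ∈ W ↔ ∃ x : ↥Ep, v = (x : H) + ((φ x : ↥Em) : H)) := by
  have memP : ∀ x, x ∈ Ep ↔ γ x = Complex.I • x := by
    intro x; rw [hEp]; simp [sub_eq_zero]
  have memM : ∀ x, x ∈ Em ↔ γ x = -(Complex.I • x) := by
    intro x; rw [hEm]; simp [add_eq_zero_iff_eq_neg]
  clear hEp hEm hdim
  have orth : ∀ x ∈ Ep, ∀ y ∈ Em, inner ℂ x y = 0 := by
    intro x hx y hy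
    have h := hγ_unitary x y
    rw [(memP x).1 hx, (memM y).1 hy, inner_neg_right, inner_smul_left, inner_smul_right,
      Complex.conj_I] at h
    have h2 : (inner ℂ x y : ℂ) = - inner ℂ x y := by
      linear_combination (-1 : ℂ) * h + (inner ℂ x y : ℂ) * Complex.I_sq
    exact self_eq_neg.1 h2
  have orth' : ∀ x ∈ Ep, ∀ y ∈ Em, inner ℂ y x = 0 := by
    intro x hx y hy
    exact inner_eq_zero_symm.1 (orth x hx y hy)
  let P : H →ₗ[ℂ] Ep := LinearMap.codRestrict Ep
    ((1 / 2 : ℂ) • (LinearMap.id - Complex.I • γ)) (by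
      intro v
      rw [memP]
      simp only [LinearMap.smul_apply, LinearMap.sub_apply, LinearMap.id_apply, map_smul,
        map_sub, hγ_sq]
      match_scalars <;> first
          | ring1
          | linear_combination (1 / 2 : ℂ) * Complex.I_sq
          | linear_combination (-1 / 2 : ℂ) * Complex.I_sq)
  let M : H →ₗ[ℂ] Em := LinearMap.codRestrict Em
    ((1 / 2 : ℂ) • (LinearMap.id + Complex.I • γ)) (by
      intro v
      rw [memM]
      simp only [LinearMap.smul_apply, LinearMap.add_apply, LinearMap.id_apply, map_smul,
        map_add, hγ_sq]
      match_scalars <;> first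
          | ring1
          | linear_combination (1 / 2 : ℂ) * Complex.I_sq
          | linear_combination (-1 / 2 : ℂ) * Complex.I_sq)
  have dec : ∀ v, (P v : H) + (M v : H) = v := by
    intro v
    simp only [P, M, LinearMap.codRestrict_apply, LinearMap.smul_apply, LinearMap.add_apply,
      LinearMap.sub_apply, LinearMap.id_apply]
    module
  have gdec : ∀ (a : Ep) (b : Em), γ ((a : H) + b) = Complex.I • ((a : H) - b) := by
    intro a b
    rw [map_add, (memP a).1 a.2, (memM b).1 b.2]; module
  have key : ∀ (a a' : Ep) (b b' : Em),
      (inner ℂ (γ ((a : H) + b)) ((a' : H) + b') : ℂ) =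
        -Complex.I * (inner ℂ (a : H) a' - inner ℂ (b : H) b') := by
    intro a a' b b'
    rw [gdec, inner_smul_left, inner_sub_left, inner_add_right, inner_add_right,
      orth a a.2 b' b'.2, orth' a' a'.2 b b.2, Complex.conj_I]
    ring
  have disj : ∀ (a a' : Ep) (b b' : Em), (a : H) + b = a' + b' → a = a' := by
    intro a a' b b' h
    have h1 : (a : H) - a' = b' - b := by
      rw [sub_eq_sub_iff_add_eq_add, h, add_comm]
    have h2 := orth ((a : H) - a') (Ep.sub_mem a.2 a'.2) ((a : H) - a')
      (h1 ▸ Em.sub_mem b'.2 b.2)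
    exact Subtype.ext (sub_eq_zero.1 (inner_self_eq_zero.1 h2))
  refine ⟨?_, ?_⟩
  · intro φ
    refine ⟨LinearMap.range (Ep.subtype + Em.subtype ∘ₗ φ.toLinearEquiv.toLinearMap), ?_, ?_⟩
    · apply le_antisymm
      · rintro _ ⟨_, ⟨x, rfl⟩, rfl⟩
        rw [Submodule.mem_orthogonal']
        rintro _ ⟨y, rfl⟩
        have h := key x y (φ x) (φ y)
        have h2 := φ.inner_map_map x y
        rw [Submodule.coe_inner, Submodule.coe_inner] at h2
        rw [h2, sub_self, mul_zero] at h
        exact h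
      · intro v hv
        rw [Submodule.mem_orthogonal] at hv
        have hb : φ (P v) + M v = 0 := by
          obtain ⟨x, hx⟩ := φ.surjective (φ (P v) + M v)
          have h := hv _ ⟨x, rfl⟩
          have h' : (inner ℂ ((x : H) + φ x) ((P v : H) + M v) : ℂ) = 0 := by
            rw [dec]; exact h
          rw [inner_add_left, inner_add_right, inner_add_right, orth x x.2 _ (M v).2,
            orth' _ (P v).2 _ (φ x).2, add_zero, zero_add, ← Submodule.coe_inner,
            ← Submodule.coe_inner, ← φ.inner_map_map, ← inner_add_right, ← hx] at h'
          rw [← hx]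
          exact inner_self_eq_zero.1 h'
        have hb' : (M v : H) = -(φ (P v) : H) := by
          have := congrArg (Subtype.val) hb
          exact eq_neg_of_add_eq_zero_right this
        refine ⟨_, ⟨(-Complex.I) • P v, rfl⟩, ?_⟩
        have h := gdec ((-Complex.I) • P v) (φ ((-Complex.I) • P v))
        refine Eq.trans h ?_
        conv_rhs => rw [← dec v, hb']
        rw [map_smul, Submodule.coe_smul, Submodule.coe_smul]
        match_scalars <;> first
          | ring1
          | linear_combination (1 : ℂ) * Complex.I_sq
          | linear_combination (-1 : ℂ) * Complex.I_sq
    · intro v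
      constructor
      · rintro ⟨x, rfl⟩; exact ⟨x, rfl⟩
      · rintro ⟨x, rfl⟩; exact ⟨x, rfl⟩
  · intro W hW
    have iso : ∀ w ∈ W, ‖P w‖ = ‖M w‖ := by
      intro w hw
      have h1 : γ w ∈ Wᗮ := hW ▸ Submodule.mem_map_of_mem hw
      have h2 := (Submodule.mem_orthogonal' _ _).1 h1 w hw
      have h3 := key (P w) (P w) (M w) (M w)
      rw [dec, h2] at h3
      have h4 : (inner ℂ (P w : H) (P w : H) : ℂ) - inner ℂ (M w : H) (M w : H) = 0 := by
        simpa using h3.symm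
      rw [sub_eq_zero, inner_self_eq_norm_sq_to_K, inner_self_eq_norm_sq_to_K] at h4
      have h5 : ‖(P w : H)‖ ^ 2 = ‖(M w : H)‖ ^ 2 := by exact_mod_cast h4
      exact (sq_eq_sq₀ (norm_nonneg _) (norm_nonneg _)).1 h5
    have big : ∀ (v : H) (c : ℂ), γ v = c • v → c ≠ 0 → v ∈ Wᗮ → v = 0 := by
      intro v c hc hc0 hv
      have hv' := hv
      rw [← hW] at hv'
      obtain ⟨w, hw, hwv⟩ := hv'
      have h1 : -w = c • v := by rw [← hc, ← hwv, hγ_sq]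
      have h2 : v ∈ W := by
        have : c • v ∈ W := h1 ▸ W.neg_mem hw
        exact (W.smul_mem_iff hc0).1 this
      exact inner_self_eq_zero.1 ((Submodule.mem_orthogonal _ _).1 hv v h2)
    have injP : Function.Injective (P ∘ₗ W.subtype) := by
      rw [← LinearMap.ker_eq_bot, LinearMap.ker_eq_bot']
      intro w hw
      have h0 : P w = 0 := hw
      have h1 : M w = 0 := by rw [← norm_eq_zero, ← iso w w.2, h0, norm_zero]
      apply Subtype.ext
      rw [← dec w, h0, h1]; simp
    have injM : Function.Injective (M ∘ₗ W.subtype) := by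
      rw [← LinearMap.ker_eq_bot, LinearMap.ker_eq_bot']
      intro w hw
      have h0 : M w = 0 := hw
      have h1 : P w = 0 := by rw [← norm_eq_zero, iso w w.2, h0, norm_zero]
      apply Subtype.ext
      rw [← dec w, h0, h1]; simp
    have surP : Function.Surjective (P ∘ₗ W.subtype) := by
      rw [← LinearMap.range_eq_top, ← Submodule.orthogonal_eq_bot_iff, Submodule.eq_bot_iff]
      intro a ha
      apply Subtype.ext
      refine big a Complex.I ((memP a).1 a.2) Complex.I_ne_zero ?_
      rw [Submodule.mem_orthogonal]
      intro w hw
      have h := (Submodule.mem_orthogonal _ _).1 ha (P w) ⟨⟨w, hw⟩, rfl⟩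
      rw [Submodule.coe_inner] at h
      rw [← dec w, inner_add_left, h, orth' a a.2 _ (M w).2, add_zero]
    have surM : Function.Surjective (M ∘ₗ W.subtype) := by
      rw [← LinearMap.range_eq_top, ← Submodule.orthogonal_eq_bot_iff, Submodule.eq_bot_iff]
      intro a ha
      apply Subtype.ext
      refine big a (-Complex.I) (by rw [neg_smul]; exact (memM a).1 a.2)
        (neg_ne_zero.2 Complex.I_ne_zero) ?_
      rw [Submodule.mem_orthogonal]
      intro w hw
      have h := (Submodule.mem_orthogonal _ _).1 ha (M w) ⟨⟨w, hw⟩, rfl⟩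
      rw [Submodule.coe_inner] at h
      rw [← dec w, inner_add_left, h, orth _ (P w).2 a a.2, add_zero]
    let eP := LinearEquiv.ofBijective _ ⟨injP, surP⟩
    let eM := LinearEquiv.ofBijective _ ⟨injM, surM⟩
    have heP : ∀ w : W, eP w = P w := fun _ => rfl
    have heM : ∀ w : W, eM w = M w := fun _ => rfl
    let φ : Ep ≃ₗᵢ[ℂ] Em := ⟨eP.symm.trans eM, by
      intro x
      obtain ⟨w, rfl⟩ := eP.surjective x
      rw [LinearEquiv.trans_apply, LinearEquiv.symm_apply_apply, heP, heM, iso w w.2]⟩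
    have hφ : ∀ w : W, φ (P w) = M w := by
      intro w
      rw [← heP, ← heM]
      change eM (eP.symm (eP w)) = _
      rw [LinearEquiv.symm_apply_apply]
    have hgr : ∀ v : H, v ∈ W ↔ ∃ x : ↥Ep, v = (x : H) + ((φ x : ↥Em) : H) := by
      intro v
      constructor
      · intro hv
        exact ⟨P v, by rw [hφ ⟨v, hv⟩, dec]⟩
      · rintro ⟨x, rfl⟩
        obtain ⟨w, rfl⟩ := eP.surjective x
        rw [heP, hφ, dec]
        exact w.2
    refine ⟨φ, hgr, ?_⟩
    intro ψ hψ
    ext x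
    obtain ⟨y, hy⟩ := (hgr _).1 ((hψ _).2 ⟨x, rfl⟩)
    have hxy := disj _ _ _ _ hy
    subst hxy
    exact add_left_cancel hy
end

section
/- For Lagrangian subspaces V and W of H, the map x ↦ x + φ(V)(x) restricts to a linear isomorphism from ker(φ(V) − φ(W)) ⊆ E₊ onto V ∩ W. Consequently, dim(V ∩ W) equals the dimension of the eigenspace of the unitary automorphism −φ(V) ∘ φ(W)⁻¹ of E₋ for the eigenvalue −1. -/
/-- For Lagrangian subspaces `V` and `W` of `H` with graph unitaries
`φ(V), φ(W) : E₊ → E₋`, the map `x ↦ x + φ(V) x` restricts to a linear isomorphism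
from `ker (φ(V) - φ(W)) ⊆ E₊` onto `V ∩ W`.  Consequently `dim (V ∩ W)` equals the
dimension of the `(-1)`-eigenspace of the unitary automorphism `-φ(V) ∘ φ(W)⁻¹` of `E₋`. -/
theorem stmt_4
    (H : Type*) [NormedAddCommGroup H] [InnerProductSpace ℂ H] [FiniteDimensional ℂ H]
    (γ : H →ₗ[ℂ] H)
    (hγ_unitary : ∀ x y : H, (inner ℂ (γ x) (γ y) : ℂ) = inner ℂ x y)
    (hγ_sq : ∀ x : H, γ (γ x) = -x)
    (Ep Em : Submodule ℂ H)
    (hEp : Ep = LinearMap.ker (γ - Complex.I • LinearMap.id))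
    (hEm : Em = LinearMap.ker (γ + Complex.I • LinearMap.id))
    (V W : Submodule ℂ H) (hV : V.map γ = Vᗮ) (hW : W.map γ = Wᗮ)
    (φV φW : ↥Ep ≃ₗᵢ[ℂ] ↥Em)
    (hφV : ∀ v : H, v ∈ V ↔ ∃ x : ↥Ep, v = (x : H) + ((φV x : ↥Em) : H))
    (hφW : ∀ v : H, v ∈ W ↔ ∃ x : ↥Ep, v = (x : H) + ((φW x : ↥Em) : H)) :
    (∃ e : ↥(LinearMap.ker (φV.toLinearEquiv.toLinearMap - φW.toLinearEquiv.toLinearMap))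
            ≃ₗ[ℂ] ↥(V ⊓ W),
        ∀ x, ((e x : H)) = ((x : ↥Ep) : H) + ((φV (x : ↥Ep) : ↥Em) : H)) ∧
    Module.finrank ℂ ↥(V ⊓ W) =
      Module.finrank ℂ
        ↥(Module.End.eigenspace
            (-((φW.symm.trans φV).toLinearEquiv.toLinearMap) : Module.End ℂ ↥Em) (-1)) := by
  have hI : ∀ x : H, x ∈ Ep → x ∈ Em → x = 0 := by
    intro x hp hm
    rw [hEp, LinearMap.mem_ker] at hp
    rw [hEm, LinearMap.mem_ker] at hm
    simp only [LinearMap.sub_apply, LinearMap.add_apply, LinearMap.smul_apply,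
      LinearMap.id_apply] at hp hm
    have h1 : γ x = Complex.I • x := sub_eq_zero.mp hp
    rw [h1, ← add_smul] at hm
    rcases smul_eq_zero.mp hm with h | h
    · exfalso
      have := congrArg Complex.im h
      norm_num at this
    · exact h
  have huniq : ∀ (x y : ↥Ep) (a b : ↥Em), (x : H) + (a : H) = (y : H) + (b : H) →
      x = y ∧ a = b := by
    intro x y a b h
    have h1 : ((x : H) - y) = (b : H) - a := by
      rw [sub_eq_sub_iff_add_eq_add, h, add_comm]
    have h2 : (x : H) - y = 0 :=
      hI _ (Ep.sub_mem x.2 y.2) (h1 ▸ Em.sub_mem b.2 a.2)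
    have h3 : (b : H) - a = 0 := h1 ▸ h2
    exact ⟨Subtype.ext (sub_eq_zero.mp h2), Subtype.ext (sub_eq_zero.mp h3).symm⟩
  have hker : ∀ x : ↥Ep, x ∈ LinearMap.ker
      (φV.toLinearEquiv.toLinearMap - φW.toLinearEquiv.toLinearMap) ↔ φV x = φW x := by
    intro x
    rw [LinearMap.mem_ker, LinearMap.sub_apply, sub_eq_zero]
    rfl
  let f : ↥Ep →ₗ[ℂ] H := Ep.subtype + Em.subtype ∘ₗ φV.toLinearEquiv.toLinearMap
  have hf : ∀ x : ↥Ep, f x = (x : H) + (φV x : H) := fun x => rfl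
  let K := LinearMap.ker (φV.toLinearEquiv.toLinearMap - φW.toLinearEquiv.toLinearMap)
  let g : ↥K →ₗ[ℂ] ↥(V ⊓ W) := (f ∘ₗ K.subtype).codRestrict (V ⊓ W) (by
    rintro ⟨x, hx⟩
    have hx' := (hker x).mp hx
    refine ⟨(hφV _).mpr ⟨x, rfl⟩, (hφW _).mpr ⟨x, ?_⟩⟩
    rw [← hx']
    rfl)
  have hg : ∀ x : ↥K, (g x : H) = ((x : ↥Ep) : H) + (φV (x : ↥Ep) : H) := fun x => rfl
  have hbij : Function.Bijective g := by
    constructor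
    · intro x y hxy
      have h := congrArg (Subtype.val) hxy
      rw [hg, hg] at h
      exact Subtype.ext (huniq _ _ _ _ h).1
    · rintro ⟨v, hv, hw⟩
      obtain ⟨x, hx⟩ := (hφV v).mp hv
      obtain ⟨y, hy⟩ := (hφW v).mp hw
      obtain ⟨h1, h2⟩ := huniq _ _ _ _ (hx.symm.trans hy)
      subst h1
      exact ⟨⟨x, (hker x).mpr h2⟩, Subtype.ext hx.symm⟩
  let e := LinearEquiv.ofBijective g hbij
  refine ⟨⟨e, fun x => hg x⟩, ?_⟩
  have hmap : Module.End.eigenspace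
      (-((φW.symm.trans φV).toLinearEquiv.toLinearMap) : Module.End ℂ ↥Em) (-1)
      = K.map φW.toLinearEquiv.toLinearMap := by
    ext z
    have h1 : (-((φW.symm.trans φV).toLinearEquiv.toLinearMap) : Module.End ℂ ↥Em) z
      = -(φV (φW.symm z)) := rfl
    rw [Module.End.mem_eigenspace_iff, h1, neg_one_smul, neg_inj, Submodule.mem_map]
    constructor
    · intro h
      refine ⟨φW.symm z, (hker _).mpr ?_, φW.apply_symm_apply z⟩
      rw [h, φW.apply_symm_apply]
    · rintro ⟨x, hx, rfl⟩
      have hx' := (hker x).mp hx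
      change φV (φW.symm (φW x)) = φW x
      rw [φW.symm_apply_apply, hx']
  rw [hmap, ← e.finrank_eq]
  exact (LinearEquiv.finrank_map_eq φW.toLinearEquiv K).symm
end

section
/- For Lagrangian subspaces V and W of H, −(1/(πi))·Σ_{λ} log λ + dim(V ∩ W) = −(1/(πi))·Σ_{λ ≠ −1} log λ, where on the left the sum runs over all eigenvalues λ of −φ(V) ∘ φ(W)⁻¹ counted with multiplicity and on the right over those eigenvalues different from −1; i.e. adding dim(V ∩ W) to −(1/(πi)) times the trace of the logarithm of −φ(V) ∘ φ(W)⁻¹ exactly removes the contribution of the (−1)-eigenspace, so the two expressions defining m(V,W) agree. -/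
/-- The invariant `m(V,W)` of a pair of Lagrangian subspaces, defined (as in
Kirk–Lesch) by `m(V,W) = -(1/(πi)) Σ_{λ ≠ -1} log λ`, the sum running over the
eigenvalues `λ ≠ -1` (counted with algebraic multiplicity, i.e. over the roots of
the characteristic polynomial) of the unitary automorphism `-φ(V) ∘ φ(W)⁻¹` of `E₋`,
where `log` is the branch with argument in `(-π, π]` (this is `Complex.log`). -/
noncomputable def mInv {H : Type*} [NormedAddCommGroup H] [InnerProductSpace ℂ H]
    [FiniteDimensional ℂ H] {Ep Em : Submodule ℂ H}
    (φV φW : ↥Ep ≃ₗᵢ[ℂ] ↥Em) : ℂ :=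
  -(1 / ((Real.pi : ℂ) * Complex.I)) *
    (((LinearMap.charpoly
          (-((φW.symm.trans φV).toLinearEquiv.toLinearMap) : ↥Em →ₗ[ℂ] ↥Em)).roots.filter
        (fun l => l ≠ -1)).map Complex.log).sum

/-- For an isometry `U`, the generalized `(-1)`-eigenspace of `-U` is its fixed space. -/
lemma isometry_sq_aux {E : Type*} [NormedAddCommGroup E] [InnerProductSpace ℂ E]
    (U : E ≃ₗᵢ[ℂ] E) (x : E) (h : U (U x - x) = U x - x) : U x = x := by
  rw [← sub_eq_zero, ← inner_self_eq_zero (𝕜 := ℂ)]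
  have h1 : inner ℂ (U x) (U x - x) = inner ℂ x (U x - x) := by
    conv_lhs => rw [← h]
    exact U.inner_map_map _ _
  conv_lhs => rw [inner_sub_left]
  rw [h1, sub_self]

lemma maxGen_aux {E : Type*} [NormedAddCommGroup E] [InnerProductSpace ℂ E]
    (U : E ≃ₗᵢ[ℂ] E) (x : E) :
    x ∈ Module.End.maxGenEigenspace (-(U.toLinearEquiv.toLinearMap) : E →ₗ[ℂ] E) (-1) ↔
      U x = x := by
  have key : ∀ z, ((-(U.toLinearEquiv.toLinearMap) : Module.End ℂ E)
      - (-1 : ℂ) • (1 : Module.End ℂ E)) z = -(U z - z) := by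
    intro z
    simp
    abel
  rw [Module.End.mem_maxGenEigenspace]
  constructor
  · rintro ⟨k, hk⟩
    induction k generalizing x with
    | zero =>
      have hx : x = 0 := by simpa using hk
      simp [hx]
    | succ k ih =>
      rw [pow_succ, Module.End.mul_apply, key] at hk
      have := ih _ hk
      apply isometry_sq_aux
      rw [map_neg] at this
      exact neg_injective this
  · intro h
    refine ⟨1, ?_⟩
    rw [pow_one, key, h]
    simp

/-- For Lagrangian subspaces `V`, `W` of `H`:
`-(1/(πi)) Σ_λ log λ + dim (V ∩ W) = -(1/(πi)) Σ_{λ ≠ -1} log λ`, where on the left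
the sum runs over all eigenvalues of `-φ(V) ∘ φ(W)⁻¹` counted with multiplicity and on
the right over those different from `-1`; i.e. the two expressions defining `m(V,W)` agree. -/
theorem stmt_5
    (H : Type*) [NormedAddCommGroup H] [InnerProductSpace ℂ H] [FiniteDimensional ℂ H]
    (γ : H →ₗ[ℂ] H)
    (hγ_unitary : ∀ x y : H, (inner ℂ (γ x) (γ y) : ℂ) = inner ℂ x y)
    (hγ_sq : ∀ x : H, γ (γ x) = -x)
    (Ep Em : Submodule ℂ H)
    (hEp : Ep = LinearMap.ker (γ - Complex.I • LinearMap.id))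
    (hEm : Em = LinearMap.ker (γ + Complex.I • LinearMap.id))
    (V W : Submodule ℂ H) (hV : V.map γ = Vᗮ) (hW : W.map γ = Wᗮ)
    (φV φW : ↥Ep ≃ₗᵢ[ℂ] ↥Em)
    (hφV : ∀ v : H, v ∈ V ↔ ∃ x : ↥Ep, v = (x : H) + ((φV x : ↥Em) : H))
    (hφW : ∀ v : H, v ∈ W ↔ ∃ x : ↥Ep, v = (x : H) + ((φW x : ↥Em) : H)) :
    -(1 / ((Real.pi : ℂ) * Complex.I)) *
        (((LinearMap.charpoly
            (-((φW.symm.trans φV).toLinearEquiv.toLinearMap) : ↥Em →ₗ[ℂ] ↥Em)).roots.map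
          Complex.log).sum)
      + (Module.finrank ℂ ↥(V ⊓ W) : ℂ)
    = mInv φV φW := by
  classical
  set U : ↥Em ≃ₗᵢ[ℂ] ↥Em := φW.symm.trans φV with hU
  set T : ↥Em →ₗ[ℂ] ↥Em := -(U.toLinearEquiv.toLinearMap) with hT
  have hdisj : ∀ z : H, z ∈ Ep → z ∈ Em → z = 0 := by
    intro z h1 h2
    rw [hEp, LinearMap.mem_ker] at h1
    rw [hEm, LinearMap.mem_ker] at h2
    simp only [LinearMap.sub_apply, LinearMap.add_apply, LinearMap.smul_apply,
      LinearMap.id_apply] at h1 h2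
    have h3 : (2 * Complex.I) • z = 0 := by
      have : (2 * Complex.I) • z = (γ z + Complex.I • z) - (γ z - Complex.I • z) := by
        module
      rw [this, h1, h2, sub_zero]
    exact (smul_eq_zero.mp h3).resolve_left (by simp)
  have huniq : ∀ (a b : ↥Ep) (c d : ↥Em), (a : H) + c = b + d → a = b ∧ c = d := by
    intro a b c d h
    have h1 : ((a - b : ↥Ep) : H) = ((d - c : ↥Em) : H) := by
      push_cast
      rw [sub_eq_sub_iff_add_eq_add, h, add_comm]
    have h2 := hdisj _ (a - b).2 (h1 ▸ (d - c).2)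
    have h3 := h1 ▸ h2
    constructor
    · exact sub_eq_zero.mp (Subtype.ext h2)
    · exact (sub_eq_zero.mp (Subtype.ext h3)).symm
  let f : ↥Em →ₗ[ℂ] H :=
    Ep.subtype ∘ₗ φW.symm.toLinearEquiv.toLinearMap + Em.subtype
  have hf : ∀ y, f y = ((φW.symm y : ↥Ep) : H) + y := fun y => rfl
  have hfinj : Function.Injective f := by
    intro y z h
    rw [hf, hf] at h
    exact (huniq _ _ _ _ h).2
  have hmap : (Module.End.maxGenEigenspace T (-1)).map f = V ⊓ W := by
    ext v
    rw [Submodule.mem_map, Submodule.mem_inf, hφV, hφW]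
    constructor
    · rintro ⟨y, hy, rfl⟩
      rw [maxGen_aux] at hy
      refine ⟨⟨φW.symm y, ?_⟩, ⟨φW.symm y, ?_⟩⟩
      · have : φV (φW.symm y) = y := hy
        rw [hf, this]
      · rw [hf, φW.apply_symm_apply]
    · rintro ⟨⟨a, rfl⟩, ⟨b, hb⟩⟩
      obtain ⟨rfl, h2⟩ := huniq _ _ _ _ hb
      refine ⟨φW a, ?_, ?_⟩
      · rw [maxGen_aux]
        change φV (φW.symm (φW a)) = φW a
        rw [φW.symm_apply_apply, h2]
      · rw [hf, φW.symm_apply_apply, h2]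
  have hdim : Module.finrank ℂ ↥(V ⊓ W) = T.charpoly.roots.count (-1) := by
    rw [← hmap, Polynomial.count_roots, ← LinearMap.finrank_maxGenEigenspace_eq]
    exact (LinearEquiv.finrank_eq (Submodule.equivMapOfInjective f hfinj _)).symm
  have hsum : (T.charpoly.roots.map Complex.log).sum =
      ((T.charpoly.roots.filter (fun l => l ≠ -1)).map Complex.log).sum
        + (T.charpoly.roots.count (-1) : ℂ) * (Real.pi * Complex.I) := by
    conv_lhs => rw [← Multiset.filter_add_not (fun l => l ≠ -1) T.charpoly.roots]
    rw [Multiset.map_add, Multiset.sum_add]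
    congr 1
    simp only [ne_eq, not_not]
    rw [Multiset.filter_eq', Multiset.map_replicate, Multiset.sum_replicate,
      Complex.log_neg_one, nsmul_eq_mul]
  unfold mInv
  rw [hdim, hsum]
  have hpi : (Real.pi : ℂ) ≠ 0 := by exact_mod_cast Real.pi_ne_zero
  have hI := Complex.I_ne_zero
  have hc : (1 / ((Real.pi : ℂ) * Complex.I)) * (Real.pi * Complex.I) = 1 :=
    one_div_mul_cancel (mul_ne_zero hpi hI)
  linear_combination (-(T.charpoly.roots.count (-1) : ℂ)) * hc
end

section
/- For Lagrangian subspaces V and W of H: m(γ(V), γ(W)) = m(V,W). -/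
theorem graph_neg_aux
    {H : Type*} [NormedAddCommGroup H] [InnerProductSpace ℂ H]
    (γ : H →ₗ[ℂ] H) (Ep Em : Submodule ℂ H)
    (hEp : Ep = LinearMap.ker (γ - Complex.I • LinearMap.id))
    (hEm : Em = LinearMap.ker (γ + Complex.I • LinearMap.id))
    (V : Submodule ℂ H) (φ ψ : ↥Ep ≃ₗᵢ[ℂ] ↥Em)
    (hφ : ∀ v : H, v ∈ V ↔ ∃ x : ↥Ep, v = (x : H) + ((φ x : ↥Em) : H))
    (hψ : ∀ v : H, v ∈ V.map γ ↔ ∃ x : ↥Ep, v = (x : H) + ((ψ x : ↥Em) : H))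
    (x : ↥Ep) : ψ x = - φ x := by
  have hp : ∀ z ∈ Ep, γ z = Complex.I • z := by
    intro z hz
    rw [hEp, LinearMap.mem_ker] at hz
    simpa [sub_eq_zero] using hz
  have hm : ∀ z ∈ Em, γ z = -(Complex.I • z) := by
    intro z hz
    rw [hEm, LinearMap.mem_ker] at hz
    exact eq_neg_of_add_eq_zero_left (by simpa using hz)
  have h1 : γ ((x : H) + (φ x : H)) ∈ V.map γ :=
    Submodule.mem_map_of_mem ((hφ _).2 ⟨x, rfl⟩)
  obtain ⟨y, hy⟩ := (hψ _).1 h1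
  rw [map_add, hp _ x.2, hm _ (φ x).2] at hy
  have h2 : (((Complex.I • x - y : ↥Ep)) : H) = ((ψ y + Complex.I • φ x : ↥Em) : H) := by
    push_cast
    rw [sub_eq_iff_eq_add, add_right_comm, add_comm _ (y : H), ← hy]
    abel
  have h3 := hp _ (Complex.I • x - y : ↥Ep).2
  have h4 := hm _ (ψ y + Complex.I • φ x : ↥Em).2
  rw [← h2, h3] at h4
  have h5 : ((Complex.I • x - y : ↥Ep) : H) = 0 := by
    have h8 := add_eq_zero_iff_eq_neg.2 h4
    rw [← two_smul ℂ] at h8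
    have := (smul_eq_zero.1 h8).resolve_left two_ne_zero
    exact (smul_eq_zero.1 this).resolve_left Complex.I_ne_zero
  have h6 : Complex.I • x - y = 0 := Subtype.ext h5
  have h7 : ψ y + Complex.I • φ x = 0 := Subtype.ext (h2.symm.trans h5)
  rw [← sub_eq_zero.1 h6, map_smul, ← smul_add] at h7
  exact eq_neg_of_add_eq_zero_left ((smul_eq_zero.1 h7).resolve_left Complex.I_ne_zero)

/-- For Lagrangian subspaces `V` and `W` of `H`:
`m(γ(V), γ(W)) = m(V,W)`.  Here `φV, φW` are the graph unitaries of `V, W` and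
`ψV, ψW` are the graph unitaries of `γ(V), γ(W)`. -/
theorem stmt_7
    (H : Type*) [NormedAddCommGroup H] [InnerProductSpace ℂ H] [FiniteDimensional ℂ H]
    (γ : H →ₗ[ℂ] H)
    (hγ_unitary : ∀ x y : H, (inner ℂ (γ x) (γ y) : ℂ) = inner ℂ x y)
    (hγ_sq : ∀ x : H, γ (γ x) = -x)
    (Ep Em : Submodule ℂ H)
    (hEp : Ep = LinearMap.ker (γ - Complex.I • LinearMap.id))
    (hEm : Em = LinearMap.ker (γ + Complex.I • LinearMap.id))
    (V W : Submodule ℂ H) (hV : V.map γ = Vᗮ) (hW : W.map γ = Wᗮ)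
    (φV φW ψV ψW : ↥Ep ≃ₗᵢ[ℂ] ↥Em)
    (hφV : ∀ v : H, v ∈ V ↔ ∃ x : ↥Ep, v = (x : H) + ((φV x : ↥Em) : H))
    (hφW : ∀ v : H, v ∈ W ↔ ∃ x : ↥Ep, v = (x : H) + ((φW x : ↥Em) : H))
    (hψV : ∀ v : H, v ∈ V.map γ ↔ ∃ x : ↥Ep, v = (x : H) + ((ψV x : ↥Em) : H))
    (hψW : ∀ v : H, v ∈ W.map γ ↔ ∃ x : ↥Ep, v = (x : H) + ((ψW x : ↥Em) : H)) :
    mInv ψV ψW = mInv φV φW := by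
  have h1 := graph_neg_aux γ Ep Em hEp hEm V φV ψV hφV hψV
  have h2 := graph_neg_aux γ Ep Em hEp hEm W φW ψW hφW hψW
  have h3 : (ψW.symm.trans ψV).toLinearEquiv.toLinearMap
      = (φW.symm.trans φV).toLinearEquiv.toLinearMap := by
    ext z
    have h4 : ψW.symm z = - φW.symm z := by
      apply ψW.injective
      rw [ψW.apply_symm_apply, map_neg, h2, φW.apply_symm_apply, neg_neg]
    have h5 : ψV (ψW.symm z) = φV (φW.symm z) := by
      rw [h1, h4, map_neg, neg_neg]
    exact congrArg Subtype.val h5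
  unfold mInv
  rw [h3]
end

section
/- For any three Lagrangian subspaces U, V, W of H, the triple index σ̃(U,V,W) = m(U,V) + m(V,W) + m(W,U) is an integer. -/
open Polynomial in
lemma aux_exp_multiset (s : Multiset ℂ) (h : (0 : ℂ) ∉ s) :
    Complex.exp (2 * ((s.filter (fun l => l ≠ -1)).map Complex.log).sum) = s.prod ^ 2 := by
  induction s using Multiset.induction_on with
  | empty => simp
  | cons a s ih =>
    have ha : a ≠ 0 := by
      rintro rfl
      exact h (Multiset.mem_cons_self _ _)
    have hs : (0 : ℂ) ∉ s := fun h' => h (Multiset.mem_cons_of_mem h')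
    have ih' := ih hs
    by_cases h1 : a = -1
    · rw [Multiset.filter_cons_of_neg _ (by simpa using h1), ih', Multiset.prod_cons, h1]
      ring
    · rw [Multiset.filter_cons_of_pos _ (by simpa using h1), Multiset.map_cons,
        Multiset.sum_cons, mul_add, Complex.exp_add, ih', Multiset.prod_cons, two_mul,
        Complex.exp_add, Complex.exp_log ha]
      ring

lemma aux_exp_charpoly {E : Type*} [AddCommGroup E] [Module ℂ E] [FiniteDimensional ℂ E]
    (f : E →ₗ[ℂ] E) (hf : LinearMap.det f ≠ 0) :
    Complex.exp (2 * ((f.charpoly.roots.filter (fun l => l ≠ -1)).map Complex.log).sum)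
      = LinearMap.det f ^ 2 := by
  have hd := LinearMap.det_eq_sign_charpoly_coeff f
  have hp := (IsAlgClosed.splits f.charpoly).coeff_zero_eq_prod_roots_of_monic f.charpoly_monic
  have hsq : LinearMap.det f ^ 2 = f.charpoly.roots.prod ^ 2 := by
    rw [hd, hp, mul_pow, mul_pow, ← pow_mul, ← pow_mul, mul_comm _ 2, pow_mul, mul_comm _ 2,
      pow_mul]
    simp
  rw [aux_exp_multiset, hsq]
  intro h0
  have := Multiset.prod_eq_zero h0
  rw [this] at hsq
  exact hf (by simpa using hsq)

lemma aux_det_sq {H : Type*} [NormedAddCommGroup H] [InnerProductSpace ℂ H]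
    [FiniteDimensional ℂ H] {Ep Em : Submodule ℂ H} (φV φW : ↥Ep ≃ₗᵢ[ℂ] ↥Em) :
    LinearMap.det (-((φW.symm.trans φV).toLinearEquiv.toLinearMap) : ↥Em →ₗ[ℂ] ↥Em) ^ 2
      = LinearMap.det ((φW.symm.trans φV).toLinearEquiv.toLinearMap : ↥Em →ₗ[ℂ] ↥Em) ^ 2 := by
  rw [← neg_one_smul ℂ, LinearMap.det_smul, mul_pow, ← pow_mul, mul_comm _ 2, pow_mul]
  simp

lemma aux_exp_mInv {H : Type*} [NormedAddCommGroup H] [InnerProductSpace ℂ H]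
    [FiniteDimensional ℂ H] {Ep Em : Submodule ℂ H} (φV φW : ↥Ep ≃ₗᵢ[ℂ] ↥Em) :
    Complex.exp (-(2 * Real.pi * Complex.I) * mInv φV φW)
      = LinearMap.det ((φW.symm.trans φV).toLinearEquiv.toLinearMap : ↥Em →ₗ[ℂ] ↥Em) ^ 2 := by
  have h0 : LinearMap.det ((φW.symm.trans φV).toLinearEquiv.toLinearMap : ↥Em →ₗ[ℂ] ↥Em) ≠ 0 :=
    ((φW.symm.trans φV).toLinearEquiv.isUnit_det').ne_zero
  rw [← aux_det_sq, ← aux_exp_charpoly]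
  · unfold mInv
    congr 1
    have hpi : (Real.pi : ℂ) ≠ 0 := by exact_mod_cast Real.pi_ne_zero
    have hI := Complex.I_ne_zero
    field_simp
  · intro h
    have := aux_det_sq φV φW
    rw [h] at this
    exact pow_ne_zero 2 h0 (by rw [← this]; simp)

/-- For any three Lagrangian subspaces `U`, `V`, `W` of `H`, the
triple (Maslov) index `σ̃(U,V,W) = m(U,V) + m(V,W) + m(W,U)` is an integer. -/
theorem stmt_8
    (H : Type*) [NormedAddCommGroup H] [InnerProductSpace ℂ H] [FiniteDimensional ℂ H]
    (γ : H →ₗ[ℂ] H)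
    (hγ_unitary : ∀ x y : H, (inner ℂ (γ x) (γ y) : ℂ) = inner ℂ x y)
    (hγ_sq : ∀ x : H, γ (γ x) = -x)
    (Ep Em : Submodule ℂ H)
    (hEp : Ep = LinearMap.ker (γ - Complex.I • LinearMap.id))
    (hEm : Em = LinearMap.ker (γ + Complex.I • LinearMap.id))
    (U V W : Submodule ℂ H) (hU : U.map γ = Uᗮ) (hV : V.map γ = Vᗮ) (hW : W.map γ = Wᗮ)
    (φU φV φW : ↥Ep ≃ₗᵢ[ℂ] ↥Em)
    (hφU : ∀ v : H, v ∈ U ↔ ∃ x : ↥Ep, v = (x : H) + ((φU x : ↥Em) : H))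
    (hφV : ∀ v : H, v ∈ V ↔ ∃ x : ↥Ep, v = (x : H) + ((φV x : ↥Em) : H))
    (hφW : ∀ v : H, v ∈ W ↔ ∃ x : ↥Ep, v = (x : H) + ((φW x : ↥Em) : H)) :
    ∃ n : ℤ, mInv φU φV + mInv φV φW + mInv φW φU = (n : ℂ) := by
  have key : Complex.exp (-(2 * Real.pi * Complex.I) *
      (mInv φU φV + mInv φV φW + mInv φW φU)) = 1 := by
    rw [mul_add, mul_add, Complex.exp_add, Complex.exp_add, aux_exp_mInv, aux_exp_mInv,
      aux_exp_mInv, ← mul_pow, ← mul_pow, ← LinearMap.det_comp, ← LinearMap.det_comp]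
    have : ((φV.symm.trans φU).toLinearEquiv.toLinearMap ∘ₗ
        (φW.symm.trans φV).toLinearEquiv.toLinearMap) ∘ₗ
        (φU.symm.trans φW).toLinearEquiv.toLinearMap = (LinearMap.id : ↥Em →ₗ[ℂ] ↥Em) := by
      ext x
      simp
    rw [this]
    simp
  obtain ⟨n, hn⟩ := Complex.exp_eq_one_iff.mp key
  refine ⟨-n, ?_⟩
  have h2 := Complex.two_pi_I_ne_zero
  apply mul_left_cancel₀ h2
  push_cast
  linear_combination -hn
end

section
/- For any Lagrangian subspaces V₁, V₂, W₁, W₂ of H the following identity holds: m(V₁,V₂) − m(γ(V₁),W₁) + m(γ(V₂),W₂) − m(W₁,W₂) = σ̃(V₁,V₂,γ(W₂)) − σ̃(γ(V₁),W₁,W₂). -/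
/-- The triple (Maslov) index `σ̃(U,V,W) = m(U,V) + m(V,W) + m(W,U)`, expressed in
terms of the graph unitaries of the three Lagrangian subspaces. -/
noncomputable def sigmaTilde {H : Type*} [NormedAddCommGroup H] [InnerProductSpace ℂ H]
    [FiniteDimensional ℂ H] {Ep Em : Submodule ℂ H}
    (φU φV φW : ↥Ep ≃ₗᵢ[ℂ] ↥Em) : ℂ :=
  mInv φU φV + mInv φV φW + mInv φW φU

theorem mInv_congr_aux {H : Type*} [NormedAddCommGroup H] [InnerProductSpace ℂ H]
    [FiniteDimensional ℂ H] {Ep Em : Submodule ℂ H}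
    (a b c d : ↥Ep ≃ₗᵢ[ℂ] ↥Em) (h : ∀ y, a (b.symm y) = c (d.symm y)) :
    mInv a b = mInv c d := by
  have : (b.symm.trans a) = (d.symm.trans c) := by
    ext y
    simp [h]
  unfold mInv
  rw [this]

theorem symm_neg_aux {H : Type*} [NormedAddCommGroup H] [InnerProductSpace ℂ H]
    {Ep Em : Submodule ℂ H} (φ ψ : ↥Ep ≃ₗᵢ[ℂ] ↥Em) (h : ∀ x, ψ x = - φ x) (y : ↥Em) :
    ψ.symm y = - φ.symm y := by
  apply ψ.injective
  rw [h (- φ.symm y)]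
  simp

/-- For Lagrangian subspaces `V₁, V₂, W₁, W₂` of `H` (with graph
unitaries `φV₁, φV₂, φW₁, φW₂`, and with `ψV₁, ψV₂, ψW₂` the graph unitaries of
`γ(V₁), γ(V₂), γ(W₂)`):
`m(V₁,V₂) − m(γ(V₁),W₁) + m(γ(V₂),W₂) − m(W₁,W₂) = σ̃(V₁,V₂,γ(W₂)) − σ̃(γ(V₁),W₁,W₂)`. -/
theorem stmt_9
    (H : Type*) [NormedAddCommGroup H] [InnerProductSpace ℂ H] [FiniteDimensional ℂ H]
    (γ : H →ₗ[ℂ] H)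
    (hγ_unitary : ∀ x y : H, (inner ℂ (γ x) (γ y) : ℂ) = inner ℂ x y)
    (hγ_sq : ∀ x : H, γ (γ x) = -x)
    (Ep Em : Submodule ℂ H)
    (hEp : Ep = LinearMap.ker (γ - Complex.I • LinearMap.id))
    (hEm : Em = LinearMap.ker (γ + Complex.I • LinearMap.id))
    (V₁ V₂ W₁ W₂ : Submodule ℂ H)
    (hV₁ : V₁.map γ = V₁ᗮ) (hV₂ : V₂.map γ = V₂ᗮ)
    (hW₁ : W₁.map γ = W₁ᗮ) (hW₂ : W₂.map γ = W₂ᗮ)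
    (φV₁ φV₂ φW₁ φW₂ ψV₁ ψV₂ ψW₂ : ↥Ep ≃ₗᵢ[ℂ] ↥Em)
    (hφV₁ : ∀ v : H, v ∈ V₁ ↔ ∃ x : ↥Ep, v = (x : H) + ((φV₁ x : ↥Em) : H))
    (hφV₂ : ∀ v : H, v ∈ V₂ ↔ ∃ x : ↥Ep, v = (x : H) + ((φV₂ x : ↥Em) : H))
    (hφW₁ : ∀ v : H, v ∈ W₁ ↔ ∃ x : ↥Ep, v = (x : H) + ((φW₁ x : ↥Em) : H))
    (hφW₂ : ∀ v : H, v ∈ W₂ ↔ ∃ x : ↥Ep, v = (x : H) + ((φW₂ x : ↥Em) : H))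
    (hψV₁ : ∀ v : H, v ∈ V₁.map γ ↔ ∃ x : ↥Ep, v = (x : H) + ((ψV₁ x : ↥Em) : H))
    (hψV₂ : ∀ v : H, v ∈ V₂.map γ ↔ ∃ x : ↥Ep, v = (x : H) + ((ψV₂ x : ↥Em) : H))
    (hψW₂ : ∀ v : H, v ∈ W₂.map γ ↔ ∃ x : ↥Ep, v = (x : H) + ((ψW₂ x : ↥Em) : H)) :
    mInv φV₁ φV₂ - mInv ψV₁ φW₁ + mInv ψV₂ φW₂ - mInv φW₁ φW₂
      = sigmaTilde φV₁ φV₂ ψW₂ - sigmaTilde ψV₁ φW₁ φW₂ := by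
  have h1 := graph_neg_aux γ Ep Em hEp hEm V₁ φV₁ ψV₁ hφV₁ hψV₁
  have h2 := graph_neg_aux γ Ep Em hEp hEm V₂ φV₂ ψV₂ hφV₂ hψV₂
  have h3 := graph_neg_aux γ Ep Em hEp hEm W₂ φW₂ ψW₂ hφW₂ hψW₂
  have s1 := symm_neg_aux _ _ h1
  have s3 := symm_neg_aux _ _ h3
  have k1 : mInv ψV₂ φW₂ = mInv φV₂ ψW₂ :=
    mInv_congr_aux _ _ _ _ fun y => by rw [h2, s3, map_neg]
  have k2 : mInv ψW₂ φV₁ = mInv φW₂ ψV₁ :=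
    mInv_congr_aux _ _ _ _ fun y => by rw [h3, s1, map_neg]
  unfold sigmaTilde
  rw [k1, k2]
  ring
end

section
/- If V ⊆ H₀ × H₁ is a Lagrangian subspace (γ(V) = V^⊥) and W ⊆ H₀ is a Lagrangian subspace (γ₀(W) = W^⊥), then the symplectic reduction L := {x₁ ∈ H₁ : there exists w ∈ W with (w, x₁) ∈ V} is a Lagrangian subspace of H₁, i.e. γ₁(L) = L^⊥. (This is the linear-algebraic content of the statement that the map L_{X,α}(W) = P₁(V ∩ (W ⊕ H₁)) induced by a bordism takes Lagrangian subspaces to Lagrangian subspaces.) -/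
/-- Let `(H₀, γ₀)` and `(H₁, γ₁)` be finite-dimensional complex
inner product spaces with unitary automorphisms satisfying `γᵢ² = -id`, and equip
`H₀ × H₁` (with the `ℓ²` product inner product) with `γ(x₀,x₁) = (γ₀ x₀, γ₁ x₁)`.
If `V ⊆ H₀ × H₁` is Lagrangian and `W ⊆ H₀` is Lagrangian, then the symplectic
reduction `L = {x₁ ∈ H₁ | ∃ w ∈ W, (w, x₁) ∈ V}` is a Lagrangian subspace of `H₁`. -/
theorem stmt_10
    (H₀ H₁ : Type*)
    [NormedAddCommGroup H₀] [InnerProductSpace ℂ H₀] [FiniteDimensional ℂ H₀]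
    [NormedAddCommGroup H₁] [InnerProductSpace ℂ H₁] [FiniteDimensional ℂ H₁]
    (γ₀ : H₀ →ₗ[ℂ] H₀)
    (hγ₀_unitary : ∀ x y : H₀, (inner ℂ (γ₀ x) (γ₀ y) : ℂ) = inner ℂ x y)
    (hγ₀_sq : ∀ x : H₀, γ₀ (γ₀ x) = -x)
    (γ₁ : H₁ →ₗ[ℂ] H₁)
    (hγ₁_unitary : ∀ x y : H₁, (inner ℂ (γ₁ x) (γ₁ y) : ℂ) = inner ℂ x y)
    (hγ₁_sq : ∀ x : H₁, γ₁ (γ₁ x) = -x)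
    (γ : WithLp 2 (H₀ × H₁) →ₗ[ℂ] WithLp 2 (H₀ × H₁))
    (hγ : ∀ (x₀ : H₀) (x₁ : H₁),
      γ ((WithLp.equiv 2 (H₀ × H₁)).symm (x₀, x₁))
        = (WithLp.equiv 2 (H₀ × H₁)).symm (γ₀ x₀, γ₁ x₁))
    (V : Submodule ℂ (WithLp 2 (H₀ × H₁))) (hV : V.map γ = Vᗮ)
    (W : Submodule ℂ H₀) (hW : W.map γ₀ = Wᗮ)
    (L : Submodule ℂ H₁)
    (hL : ∀ x₁ : H₁, x₁ ∈ L ↔ ∃ w ∈ W, (WithLp.equiv 2 (H₀ × H₁)).symm (w, x₁) ∈ V) :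
    L.map γ₁ = Lᗮ := by
  have hγ' : ∀ z : WithLp 2 (H₀ × H₁), γ z = WithLp.toLp 2 (γ₀ z.fst, γ₁ z.snd) :=
    fun z => hγ z.fst z.snd
  have hL' : ∀ x₁ : H₁, x₁ ∈ L ↔ ∃ w ∈ W, WithLp.toLp 2 (w, x₁) ∈ V := hL
  apply le_antisymm
  · rintro _ ⟨x, hx, rfl⟩
    rw [Submodule.mem_orthogonal]
    intro y hy
    obtain ⟨w, hw, hwV⟩ := (hL' x).1 hx
    obtain ⟨u, hu, huV⟩ := (hL' y).1 hy
    have h1 : γ (WithLp.toLp 2 (w, x)) ∈ Vᗮ := hV ▸ Submodule.mem_map_of_mem hwV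
    have h2 : γ₀ w ∈ Wᗮ := hW ▸ Submodule.mem_map_of_mem hw
    have h3 := (Submodule.mem_orthogonal _ _).1 h1 _ huV
    have h4 := (Submodule.mem_orthogonal _ _).1 h2 _ hu
    rw [hγ', WithLp.prod_inner_apply] at h3
    simpa [h4] using h3
  · intro y hy
    let j : H₀ →ₗ[ℂ] WithLp 2 (H₀ × H₁) :=
      (WithLp.linearEquiv 2 ℂ (H₀ × H₁)).symm.toLinearMap ∘ₗ LinearMap.inl ℂ H₀ H₁
    have hj : ∀ a, j a = WithLp.toLp 2 (a, 0) := fun a => rfl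
    have key : WithLp.toLp 2 ((0 : H₀), y) ∈ Vᗮ ⊔ (Wᗮ).map j := by
      rw [← Submodule.orthogonal_orthogonal (Vᗮ ⊔ (Wᗮ).map j), Submodule.mem_orthogonal]
      intro z hz
      rw [← Submodule.inf_orthogonal, Submodule.orthogonal_orthogonal] at hz
      obtain ⟨hzV, hzW⟩ := hz
      have hz1 : z.fst ∈ W := by
        rw [← Submodule.orthogonal_orthogonal W, Submodule.mem_orthogonal]
        intro a ha
        have := (Submodule.mem_orthogonal _ _).1 hzW _ (Submodule.mem_map_of_mem ha)
        rw [hj, WithLp.prod_inner_apply] at this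
        simpa using this
      have hz2 : z.snd ∈ L := (hL' _).2 ⟨z.fst, hz1, hzV⟩
      have := (Submodule.mem_orthogonal _ _).1 hy _ hz2
      rw [WithLp.prod_inner_apply]
      simpa using this
    obtain ⟨a, ha, b, hb, hab⟩ := Submodule.mem_sup.1 key
    rw [← hV] at ha
    rw [← hW] at hb
    obtain ⟨v, hv, rfl⟩ := ha
    obtain ⟨_, ⟨w, hw, rfl⟩, rfl⟩ := hb
    rw [hγ', hj] at hab
    have e0 : γ₀ v.fst + γ₀ w = 0 := congrArg WithLp.fst hab
    have e1 : γ₁ v.snd + 0 = y := congrArg WithLp.snd hab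
    have e2 : v.fst = -w := by
      have h := hγ₀_sq (v.fst + w)
      rw [map_add, e0, map_zero] at h
      exact eq_neg_of_add_eq_zero_left (neg_eq_zero.1 h.symm)
    refine ⟨v.snd, (hL' _).2 ⟨v.fst, ?_, hv⟩, by simpa using e1⟩
    rw [e2]
    exact W.neg_mem hw
end

section
/- The matrices A and B always commute, and the relations C·A·C⁻¹ = A·B² and C·B·C⁻¹ = A³·B⁷ hold if and only if 2φ + 2ψ ∈ ℤ and 3φ + 8ψ ∈ ℤ (equivalently, the row vector (φ,ψ)·(f + I) has integer entries for f = [[1,3],[2,7]]). Consequently, the assignment μ ↦ A, λ ↦ B, τ ↦ C extends to a group homomorphism from the presented group ⟨μ, λ, τ | μλμ⁻¹λ⁻¹ = 1, τμτ⁻¹ = μλ², τλτ⁻¹ = μ³λ⁷⟩ (the fundamental group of the mapping torus of f acting on the 2-torus) to SU(2) exactly when these two congruences hold; in particular they hold for (φ,ψ) = (1/5, −7/10) and for (φ,ψ) = (2/5, −19/10). -/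
lemma aux_diag_pow (x y : ℂ) (n : ℕ) :
    (!![x, 0; 0, y] : Matrix (Fin 2) (Fin 2) ℂ) ^ n = !![x ^ n, 0; 0, y ^ n] := by
  induction n with
  | zero => simp [Matrix.one_fin_two]
  | succ k ih => rw [pow_succ, ih, Matrix.mul_fin_two]; simp [pow_succ]

lemma aux_rel (x y : ℂ) (hx : x ≠ 0) (hy : y ≠ 0) (z : ℂ) (hz : z ≠ 0) (m n : ℕ) :
    (!![0, 1; -1, 0] : Matrix (Fin 2) (Fin 2) ℂ) * !![z, 0; 0, z⁻¹]
      = !![x, 0; 0, x⁻¹] ^ m * !![y, 0; 0, y⁻¹] ^ n * !![0, 1; -1, 0]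
      ↔ z * x ^ m * y ^ n = 1 := by
  rw [aux_diag_pow, aux_diag_pow]
  have hxm := pow_ne_zero m hx
  have hyn := pow_ne_zero n hy
  simp only [Matrix.mul_fin_two]
  constructor
  · intro h
    have := congrFun (congrFun h 0) 1
    simp at this
    rw [mul_assoc, ← this, mul_inv_cancel₀ hz]
  · intro h
    have h1 : x ^ m * y ^ n = z⁻¹ := by
      apply eq_inv_of_mul_eq_one_left; rw [← h]; ring
    have h2 : (x ^ m)⁻¹ * (y ^ n)⁻¹ = z := by
      rw [← mul_inv, h1, inv_inv]
    ext i j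
    fin_cases i <;> fin_cases j <;> simp [h1, h2]

lemma aux_exp (t : ℝ) : Complex.exp (2 * (Real.pi : ℂ) * Complex.I * (t : ℂ)) = 1 ↔
    ∃ n : ℤ, t = (n : ℝ) := by
  rw [Complex.exp_eq_one_iff]
  refine exists_congr fun n => ?_
  rw [mul_comm (n : ℂ), mul_right_inj' Complex.two_pi_I_ne_zero]
  exact_mod_cast Iff.rfl

/-- Let `A = diag(e^{2πiφ}, e^{-2πiφ})`, `B = diag(e^{2πiψ}, e^{-2πiψ})`,
`C = [[0,1],[-1,0]]` in `SU(2)`.  Then `A` and `B` always commute, the relations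
`C·A·C⁻¹ = A·B²` and `C·B·C⁻¹ = A³·B⁷` hold iff `2φ + 2ψ ∈ ℤ` and `3φ + 8ψ ∈ ℤ`,
and the assignment `μ ↦ A`, `λ ↦ B`, `τ ↦ C` extends to a homomorphism from the
presented group `⟨μ, λ, τ | μλμ⁻¹λ⁻¹, τμτ⁻¹(μλ²)⁻¹, τλτ⁻¹(μ³λ⁷)⁻¹⟩` (the fundamental
group of the mapping torus of `f = [[1,3],[2,7]]` acting on the 2-torus) to `SU(2)`
exactly when these two congruences hold; in particular they hold for
`(φ,ψ) = (1/5, -7/10)` and for `(φ,ψ) = (2/5, -19/10)`. -/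
theorem stmt_12
    (φ ψ : ℝ)
    (A B C : Matrix (Fin 2) (Fin 2) ℂ)
    (hA : A = !![Complex.exp (2 * (Real.pi : ℂ) * Complex.I * (φ : ℂ)), 0;
                 0, Complex.exp (-(2 * (Real.pi : ℂ) * Complex.I * (φ : ℂ)))])
    (hB : B = !![Complex.exp (2 * (Real.pi : ℂ) * Complex.I * (ψ : ℂ)), 0;
                 0, Complex.exp (-(2 * (Real.pi : ℂ) * Complex.I * (ψ : ℂ)))])
    (hC : C = !![0, 1; -1, 0])
    (a b c : Matrix.specialUnitaryGroup (Fin 2) ℂ)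
    (ha : (a : Matrix (Fin 2) (Fin 2) ℂ) = A)
    (hb : (b : Matrix (Fin 2) (Fin 2) ℂ) = B)
    (hc : (c : Matrix (Fin 2) (Fin 2) ℂ) = C)
    (rels : Set (FreeGroup (Fin 3)))
    (hrels : rels =
      { FreeGroup.of 0 * FreeGroup.of 1 * (FreeGroup.of 0)⁻¹ * (FreeGroup.of 1)⁻¹,
        FreeGroup.of 2 * FreeGroup.of 0 * (FreeGroup.of 2)⁻¹ *
          (FreeGroup.of 0 * FreeGroup.of 1 ^ 2)⁻¹,
        FreeGroup.of 2 * FreeGroup.of 1 * (FreeGroup.of 2)⁻¹ *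
          (FreeGroup.of 0 ^ 3 * FreeGroup.of 1 ^ 7)⁻¹ }) :
    -- `A` and `B` always commute
    A * B = B * A ∧
    -- the two relations hold iff the congruences hold
    ((C * A * C⁻¹ = A * B ^ 2 ∧ C * B * C⁻¹ = A ^ 3 * B ^ 7) ↔
      ((∃ n : ℤ, 2 * φ + 2 * ψ = (n : ℝ)) ∧ (∃ n : ℤ, 3 * φ + 8 * ψ = (n : ℝ)))) ∧
    -- the assignment extends to a group homomorphism exactly when the congruences hold
    ((∃ ρ : PresentedGroup rels →* Matrix.specialUnitaryGroup (Fin 2) ℂ,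
        ρ (PresentedGroup.of 0) = a ∧ ρ (PresentedGroup.of 1) = b ∧
          ρ (PresentedGroup.of 2) = c) ↔
      ((∃ n : ℤ, 2 * φ + 2 * ψ = (n : ℝ)) ∧ (∃ n : ℤ, 3 * φ + 8 * ψ = (n : ℝ)))) ∧
    -- in particular the congruences hold for the two explicit pairs
    (((φ = 1/5 ∧ ψ = -7/10) ∨ (φ = 2/5 ∧ ψ = -19/10)) →
      ((∃ n : ℤ, 2 * φ + 2 * ψ = (n : ℝ)) ∧ (∃ n : ℤ, 3 * φ + 8 * ψ = (n : ℝ)))) := by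
  set x := Complex.exp (2 * (Real.pi : ℂ) * Complex.I * (φ : ℂ)) with hx
  set y := Complex.exp (2 * (Real.pi : ℂ) * Complex.I * (ψ : ℂ)) with hy
  rw [Complex.exp_neg, ← hx] at hA
  rw [Complex.exp_neg, ← hy] at hB
  have hx0 : x ≠ 0 := Complex.exp_ne_zero _
  have hy0 : y ≠ 0 := Complex.exp_ne_zero _
  have e1 : x * x ^ 1 * y ^ 2 = 1 ↔ ∃ n : ℤ, 2 * φ + 2 * ψ = (n : ℝ) := by
    rw [← aux_exp, hx, hy, ← Complex.exp_nat_mul, ← Complex.exp_nat_mul, ← Complex.exp_add,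
      ← Complex.exp_add]
    refine iff_of_eq (congrArg (fun w => Complex.exp w = 1) ?_)
    push_cast; ring
  have e2 : y * x ^ 3 * y ^ 7 = 1 ↔ ∃ n : ℤ, 3 * φ + 8 * ψ = (n : ℝ) := by
    rw [← aux_exp, hx, hy, ← Complex.exp_nat_mul, ← Complex.exp_nat_mul, ← Complex.exp_add,
      ← Complex.exp_add]
    refine iff_of_eq (congrArg (fun w => Complex.exp w = 1) ?_)
    push_cast; ring
  have hAB : A * B = B * A := by
    rw [hA, hB, Matrix.mul_fin_two, Matrix.mul_fin_two]; simp [mul_comm]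
  have r1 : C * A = A * B ^ 2 * C ↔ ∃ n : ℤ, 2 * φ + 2 * ψ = (n : ℝ) := by
    rw [← e1, ← aux_rel x y hx0 hy0 x hx0 1 2, pow_one, hA, hB, hC]
  have r2 : C * B = A ^ 3 * B ^ 7 * C ↔ ∃ n : ℤ, 3 * φ + 8 * ψ = (n : ℝ) := by
    rw [← e2, ← aux_rel x y hx0 hy0 y hy0 3 7, hA, hB, hC]
  have hdet : IsUnit C.det := by rw [hC]; simp [Matrix.det_fin_two]
  have conj : ∀ M N : Matrix (Fin 2) (Fin 2) ℂ, C * M * C⁻¹ = N ↔ C * M = N * C := by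
    intro M N
    constructor
    · rintro rfl
      rw [Matrix.nonsing_inv_mul_cancel_right _ _ hdet]
    · intro h
      rw [h, Matrix.mul_nonsing_inv_cancel_right _ _ hdet]
  have g1 : c * a * c⁻¹ * (a * b ^ 2)⁻¹ = 1 ↔ C * A = A * B ^ 2 * C := by
    rw [mul_inv_eq_one, mul_inv_eq_iff_eq_mul, Subtype.ext_iff]
    simp [ha, hb, hc]
  have g2 : c * b * c⁻¹ * (a ^ 3 * b ^ 7)⁻¹ = 1 ↔ C * B = A ^ 3 * B ^ 7 * C := by
    rw [mul_inv_eq_one, mul_inv_eq_iff_eq_mul, Subtype.ext_iff]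
    simp [ha, hb, hc]
  have g0 : a * b * a⁻¹ * b⁻¹ = 1 := by
    rw [mul_inv_eq_one, mul_inv_eq_iff_eq_mul, Subtype.ext_iff]
    simpa [ha, hb] using hAB
  refine ⟨hAB, ?_, ?_, ?_⟩
  · rw [conj, conj, r1, r2]
  · rw [← r1, ← r2, ← g1, ← g2]
    constructor
    · rintro ⟨ρ, h0, h1, h2⟩
      have key : ∀ r ∈ rels, ρ (PresentedGroup.mk rels r) = 1 := by
        intro r hr
        rw [PresentedGroup.one_of_mem hr, map_one]
      have k1 := key _ (by rw [hrels]; exact Or.inr (Or.inl rfl))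
      have k2 := key _ (by rw [hrels]; exact Or.inr (Or.inr rfl))
      simp only [map_mul, map_inv, map_pow] at k1 k2
      change ρ (PresentedGroup.of 0) = a at h0
      simp only [PresentedGroup.of] at h0 h1 h2
      rw [h0, h1, h2] at k1 k2
      exact ⟨k1, k2⟩
    · rintro ⟨k1, k2⟩
      have H : ∀ r ∈ rels, FreeGroup.lift ![a, b, c] r = 1 := by
        intro r hr
        rw [hrels] at hr
        rcases hr with rfl | rfl | rfl
        · simp only [map_mul, map_inv, map_pow, FreeGroup.lift_apply_of]; exact g0
        · simp only [map_mul, map_inv, map_pow, FreeGroup.lift_apply_of]; exact k1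
        · simp only [map_mul, map_inv, map_pow, FreeGroup.lift_apply_of]; exact k2
      refine ⟨PresentedGroup.toGroup H, ?_, ?_, ?_⟩ <;> rw [PresentedGroup.toGroup.of] <;> rfl
  · rintro (⟨rfl, rfl⟩ | ⟨rfl, rfl⟩)
    · exact ⟨⟨-1, by norm_num⟩, ⟨-5, by norm_num⟩⟩
    · exact ⟨⟨-3, by norm_num⟩, ⟨-14, by norm_num⟩⟩
end

section
/- Let a, b be real numbers, not both zero, and let t > 0. Then the subspace V = span_ℂ{e₀, a·e₁ + b·e₂} of H_t is Lagrangian, i.e. γ_t(V) = V^⊥, and its graph unitary φ(V) : E₊ → E₋ satisfies φ(V)(e₀ − i·t·e₃) = e₀ + i·t·e₃ and φ(V)(e₁ − i·t·e₂) = ((ita + b)/(ita − b))·(e₁ + i·t·e₂). -/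
/-- Let `a, b` be real numbers, not both zero, and `t > 0`.  In the
torus model `H_t` (with weighted inner product `ip` and unitary `γ_t` as in the
context), the subspace `V = span_ℂ {e₀, a e₁ + b e₂}` is Lagrangian, i.e.
`γ_t(V) = V^⊥`, and its graph unitary `φ(V) : E₊ → E₋` satisfies
`φ(V)(e₀ - i t e₃) = e₀ + i t e₃` and
`φ(V)(e₁ - i t e₂) = ((ita + b)/(ita - b))·(e₁ + i t e₂)`. -/
theorem stmt_15
    (t : ℝ) (ht : 0 < t)
    (a b : ℝ) (hab : ¬(a = 0 ∧ b = 0))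
    (γ : (Fin 4 → ℂ) →ₗ[ℂ] (Fin 4 → ℂ))
    (hγ : ∀ v : Fin 4 → ℂ,
      γ v = ![-(1 / (t : ℂ)) * v 3, -(1 / (t : ℂ)) * v 2, (t : ℂ) * v 1, (t : ℂ) * v 0])
    (ip : (Fin 4 → ℂ) → (Fin 4 → ℂ) → ℂ)
    (hip : ∀ x y : Fin 4 → ℂ,
      ip x y =
        ((4 * Real.pi ^ 2 * t : ℝ) : ℂ) *
            ((starRingEnd ℂ) (x 0) * y 0 + (starRingEnd ℂ) (x 1) * y 1) +
          ((4 * Real.pi ^ 2 / t : ℝ) : ℂ) *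
            ((starRingEnd ℂ) (x 2) * y 2 + (starRingEnd ℂ) (x 3) * y 3))
    (V : Submodule ℂ (Fin 4 → ℂ))
    (hV : V = Submodule.span ℂ {![1, 0, 0, 0], ![0, (a : ℂ), (b : ℂ), 0]})
    -- `φ` is the graph unitary of `V`: it maps the `(+i)`-eigenspace of `γ_t`
    -- into the `(-i)`-eigenspace, and `V = {x + φ x | x ∈ E₊}`
    (φ : (Fin 4 → ℂ) → (Fin 4 → ℂ))
    (hφmem : ∀ x : Fin 4 → ℂ, γ x = Complex.I • x → γ (φ x) = -(Complex.I • φ x))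
    (hφgraph : ∀ v : Fin 4 → ℂ,
      v ∈ V ↔ ∃ x : Fin 4 → ℂ, γ x = Complex.I • x ∧ v = x + φ x) :
    -- `V` is Lagrangian: `γ_t(V)` is the `ip`-orthogonal complement of `V`
    (γ '' (V : Set (Fin 4 → ℂ)) = {w : Fin 4 → ℂ | ∀ v ∈ V, ip v w = 0}) ∧
    -- the values of the graph unitary
    φ ![1, 0, 0, -(Complex.I * (t : ℂ))] = ![1, 0, 0, Complex.I * (t : ℂ)] ∧
    φ ![0, 1, -(Complex.I * (t : ℂ)), 0] =
      ((Complex.I * (t : ℂ) * (a : ℂ) + (b : ℂ)) / (Complex.I * (t : ℂ) * (a : ℂ) - (b : ℂ))) •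
        ![0, 1, Complex.I * (t : ℂ), 0] := by
  have htc : (t : ℂ) ≠ 0 := by exact_mod_cast ht.ne'
  have hmem : ∀ v : Fin 4 → ℂ, v ∈ V ↔ ∃ r s : ℂ, v = ![r, s * a, s * b, 0] := by
    intro v
    rw [hV, Submodule.mem_span_pair]
    constructor
    · rintro ⟨r, s, rfl⟩
      refine ⟨r, s, ?_⟩
      ext i; fin_cases i <;> simp
    · rintro ⟨r, s, rfl⟩
      refine ⟨r, s, ?_⟩
      ext i; fin_cases i <;> simp
  have key : ∀ x y : Fin 4 → ℂ, γ x = Complex.I • x → γ y = -(Complex.I • y) → x + y ∈ V →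
      φ x = y := by
    intro x y hx hy hxy
    obtain ⟨z, hz, hzz⟩ := (hφgraph _).1 hxy
    have h1 := congrArg γ hzz
    rw [map_add, map_add, hx, hy, hz, hφmem z hz] at h1
    have hxz : x = z := by
      ext i
      have e1 := congrFun hzz i
      have e2 := congrFun h1 i
      simp only [Pi.add_apply, Pi.neg_apply, Pi.smul_apply, smul_eq_mul] at e1 e2
      have e3 : x i - y i = z i - φ z i := by
        apply mul_left_cancel₀ Complex.I_ne_zero
        linear_combination e2
      linear_combination (e1 + e3) / 2
    subst hxz
    exact (add_left_cancel hzz).symm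
  have hS : (a : ℂ) ^ 2 + (b : ℂ) ^ 2 ≠ 0 := by
    have : a ^ 2 + b ^ 2 ≠ 0 := by
      intro h
      apply hab
      constructor <;> nlinarith [sq_nonneg a, sq_nonneg b]
    exact_mod_cast this
  have hD : Complex.I * (t : ℂ) * (a : ℂ) - (b : ℂ) ≠ 0 := by
    intro h
    have h1 := congrArg Complex.re h
    have h2 := congrArg Complex.im h
    simp at h1 h2
    exact hab ⟨h2.resolve_left ht.ne', h1⟩
  have hpi : (Real.pi : ℂ) ≠ 0 := by exact_mod_cast Real.pi_ne_zero
  refine ⟨?_, ?_, ?_⟩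
  · ext w
    simp only [Set.mem_image, SetLike.mem_coe, Set.mem_ofPred_eq]
    constructor
    · rintro ⟨u, hu, rfl⟩ v hv
      obtain ⟨r, s, rfl⟩ := (hmem _).1 hu
      obtain ⟨r', s', rfl⟩ := (hmem _).1 hv
      rw [hip, hγ]
      simp
      field_simp
      ring
    · intro hw
      have h0 := hw ![1, 0, 0, 0] ((hmem _).2 ⟨1, 0, by simp⟩)
      have h1 := hw ![0, a, b, 0] ((hmem _).2 ⟨0, 1, by simp⟩)
      rw [hip] at h0 h1
      simp [htc, hpi] at h0 h1
      have h2 : (b : ℂ) * w 2 = - (t : ℂ) ^ 2 * a * w 1 := by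
        field_simp at h1
        have hp : (4 * (Real.pi : ℂ) ^ 2) ≠ 0 := by simp [hpi]
        apply mul_left_cancel₀ hp
        linear_combination h1
      refine ⟨_, (hmem _).2 ⟨w 3 / t, (a * w 2 / t - b * t * w 1) / (a ^ 2 + b ^ 2), rfl⟩, ?_⟩
      rw [hγ]
      ext i
      fin_cases i
      · simp [h0]
      · simp
        field_simp
        linear_combination (-(a : ℂ)) * h2
      · simp
        field_simp
        linear_combination (-(b : ℂ)) * h2
      · simp
        field_simp
  · apply key
    · rw [hγ]; ext i; fin_cases i <;> simp <;> field_simp <;> simp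
    · rw [hγ]; ext i; fin_cases i <;> simp <;> field_simp <;> simp
    · rw [hmem]
      refine ⟨2, 0, ?_⟩
      ext i; fin_cases i <;> simp <;> norm_num
  · apply key
    · rw [hγ]; ext i; fin_cases i <;> simp <;> field_simp <;> simp
    · rw [map_smul, smul_comm, ← smul_neg]
      congr 1
      rw [hγ]; ext i; fin_cases i <;> simp <;> field_simp <;> simp
    · rw [hmem]
      refine ⟨0, 2 * Complex.I * t / (Complex.I * t * a - b), ?_⟩
      ext i; fin_cases i <;> simp <;> field_simp <;> ring
end

section
/- Let (a,b) and (A,B) be pairs of real numbers, each pair not both zero, let t > 0, and set V = span_ℂ{e₀, a·e₁ + b·e₂} and W = span_ℂ{e₀, A·e₁ + B·e₂} in H_t. Then the unitary automorphism φ(V) ∘ φ(W)⁻¹ of E₋ fixes e₀ + i·t·e₃ and multiplies e₁ + i·t·e₂ by ((ita + b)/(ita − b))·((itA − B)/(itA + B)). In particular, if B = 0 and a, b, A are all nonzero, then dim(V ∩ W) = 1 and m(V,W) = −1 + dim(V ∩ W) − (1/(πi))·log((b + ita)/(b − ita)) = −(1/(πi))·log((b + ita)/(b − ita)). -/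
theorem aux_den (t : ℝ) (ht : 0 < t) (a b : ℝ) (hab : ¬(a = 0 ∧ b = 0)) :
    Complex.I * (t : ℂ) * (a : ℂ) - (b : ℂ) ≠ 0 ∧ Complex.I * (t : ℂ) * (a : ℂ) + (b : ℂ) ≠ 0 := by
  constructor <;>
  · intro h
    apply hab
    have h1 := congrArg Complex.re h
    have h2 := congrArg Complex.im h
    simp at h1 h2
    exact ⟨h2.resolve_left ht.ne', h1⟩

theorem aux_graph (t : ℝ) (ht : 0 < t) (a b : ℝ) (hab : ¬(a = 0 ∧ b = 0))
    (γ : (Fin 4 → ℂ) →ₗ[ℂ] (Fin 4 → ℂ))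
    (hγ : ∀ v : Fin 4 → ℂ,
      γ v = ![-(1 / (t : ℂ)) * v 3, -(1 / (t : ℂ)) * v 2, (t : ℂ) * v 1, (t : ℂ) * v 0])
    (V : Submodule ℂ (Fin 4 → ℂ))
    (hV : V = Submodule.span ℂ {![1, 0, 0, 0], ![0, (a : ℂ), (b : ℂ), 0]})
    (φ : (Fin 4 → ℂ) → (Fin 4 → ℂ))
    (hmem : ∀ x : Fin 4 → ℂ, γ x = Complex.I • x → γ (φ x) = -(Complex.I • φ x))
    (hgraph : ∀ v : Fin 4 → ℂ,
      v ∈ V ↔ ∃ x : Fin 4 → ℂ, γ x = Complex.I • x ∧ v = x + φ x)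
    (x : Fin 4 → ℂ) (hx : γ x = Complex.I • x) :
    φ x = ![x 0, (Complex.I * t * a + b) / (Complex.I * t * a - b) * x 1,
      Complex.I * t * ((Complex.I * t * a + b) / (Complex.I * t * a - b) * x 1),
      Complex.I * t * x 0] := by
  have hd := (aux_den t ht a b hab).1
  have htc : (t : ℂ) ≠ 0 := by exact_mod_cast ht.ne'
  have hy := hmem x hx
  have hv : x + φ x ∈ V := (hgraph _).2 ⟨x, hx, rfl⟩
  rw [hV, Submodule.mem_span_pair] at hv
  obtain ⟨c, d, hcd⟩ := hv
  generalize φ x = y at *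
  rw [hγ] at hx hy
  have c1 := congrFun hcd 1
  have c2 := congrFun hcd 2
  have c3 := congrFun hcd 3
  have x2 := congrFun hx 2
  have x3 := congrFun hx 3
  have y2 := congrFun hy 2
  have y3 := congrFun hy 3
  simp at c1 c2 c3 x2 x3 y2 y3
  have II := Complex.I_mul_I
  have ex2 : x 2 = - (Complex.I * t * x 1) := by linear_combination Complex.I * x2 + x 2 * II
  have ex3 : x 3 = - (Complex.I * t * x 0) := by linear_combination Complex.I * x3 + x 3 * II
  have ey2 : y 2 = Complex.I * t * y 1 := by linear_combination -Complex.I * y2 + y 2 * II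
  have ey3 : y 3 = Complex.I * t * y 0 := by linear_combination -Complex.I * y3 + y 3 * II
  have e0 : y 0 = x 0 := by
    have h : Complex.I * t * (y 0 - x 0) = 0 := by linear_combination -c3 - ex3 - ey3
    exact sub_eq_zero.1 ((mul_eq_zero.1 h).resolve_left (mul_ne_zero Complex.I_ne_zero htc))
  have e1 : y 1 = (Complex.I * t * a + b) / (Complex.I * t * a - b) * x 1 := by
    rw [div_mul_eq_mul_div, eq_div_iff hd]
    linear_combination b * c1 - a * c2 - a * ex2 - a * ey2
  funext i
  fin_cases i
  · simpa using e0
  · simpa using e1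
  · simp [ey2, e1]
  · simp [ey3, e0]

theorem aux_plus (t : ℝ) (ht : 0 < t) 
    (γ : (Fin 4 → ℂ) →ₗ[ℂ] (Fin 4 → ℂ))
    (hγ : ∀ v : Fin 4 → ℂ,
      γ v = ![-(1 / (t : ℂ)) * v 3, -(1 / (t : ℂ)) * v 2, (t : ℂ) * v 1, (t : ℂ) * v 0])
    (p q : ℂ) : γ ![p, q, -(Complex.I * t * q), -(Complex.I * t * p)] =
      Complex.I • ![p, q, -(Complex.I * t * q), -(Complex.I * t * p)] := by
  have htc : (t : ℂ) ≠ 0 := by exact_mod_cast ht.ne'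
  have II := Complex.I_mul_I
  rw [hγ]
  funext i
  fin_cases i
  · simp; field_simp
  · simp; field_simp
  · simp; linear_combination t * q * II
  · simp; linear_combination t * p * II

/-- In the torus model `H_t` let `V = span_ℂ {e₀, a e₁ + b e₂}` and
`W = span_ℂ {e₀, A e₁ + B e₂}` (each pair `(a,b)`, `(A,B)` not both zero, `t > 0`), with
graph unitaries `φV, φW : E₊ → E₋`.  Then the unitary automorphism `φ(V) ∘ φ(W)⁻¹` of
`E₋` fixes `e₀ + i t e₃` and multiplies `e₁ + i t e₂` by
`((ita + b)/(ita − b))·((itA − B)/(itA + B))`.  In particular, if `B = 0` and `a, b, A`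
are all nonzero, then `dim (V ∩ W) = 1` and, for the eigenvalue `l ≠ -1` of
`-φ(V) ∘ φ(W)⁻¹` (so that `m(V,W) = -(1/(πi)) log l`),
`m(V,W) = -1 + dim(V ∩ W) - (1/(πi)) log((b + ita)/(b − ita))
        = -(1/(πi)) log((b + ita)/(b − ita))`. -/
theorem stmt_16
    (t : ℝ) (ht : 0 < t)
    (a b A B : ℝ) (hab : ¬(a = 0 ∧ b = 0)) (hAB : ¬(A = 0 ∧ B = 0))
    (γ : (Fin 4 → ℂ) →ₗ[ℂ] (Fin 4 → ℂ))
    (hγ : ∀ v : Fin 4 → ℂ,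
      γ v = ![-(1 / (t : ℂ)) * v 3, -(1 / (t : ℂ)) * v 2, (t : ℂ) * v 1, (t : ℂ) * v 0])
    (ip : (Fin 4 → ℂ) → (Fin 4 → ℂ) → ℂ)
    (hip : ∀ x y : Fin 4 → ℂ,
      ip x y =
        ((4 * Real.pi ^ 2 * t : ℝ) : ℂ) *
            ((starRingEnd ℂ) (x 0) * y 0 + (starRingEnd ℂ) (x 1) * y 1) +
          ((4 * Real.pi ^ 2 / t : ℝ) : ℂ) *
            ((starRingEnd ℂ) (x 2) * y 2 + (starRingEnd ℂ) (x 3) * y 3))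
    (V W : Submodule ℂ (Fin 4 → ℂ))
    (hV : V = Submodule.span ℂ {![1, 0, 0, 0], ![0, (a : ℂ), (b : ℂ), 0]})
    (hW : W = Submodule.span ℂ {![1, 0, 0, 0], ![0, (A : ℂ), (B : ℂ), 0]})
    (φV φW : (Fin 4 → ℂ) → (Fin 4 → ℂ))
    (hφVmem : ∀ x : Fin 4 → ℂ, γ x = Complex.I • x → γ (φV x) = -(Complex.I • φV x))
    (hφVgraph : ∀ v : Fin 4 → ℂ,
      v ∈ V ↔ ∃ x : Fin 4 → ℂ, γ x = Complex.I • x ∧ v = x + φV x)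
    (hφWmem : ∀ x : Fin 4 → ℂ, γ x = Complex.I • x → γ (φW x) = -(Complex.I • φW x))
    (hφWgraph : ∀ v : Fin 4 → ℂ,
      v ∈ W ↔ ∃ x : Fin 4 → ℂ, γ x = Complex.I • x ∧ v = x + φW x) :
    -- `φ(V) ∘ φ(W)⁻¹` fixes `e₀ + i t e₃` ...
    (∃ x : Fin 4 → ℂ, γ x = Complex.I • x ∧
        φW x = ![1, 0, 0, Complex.I * (t : ℂ)] ∧
        φV x = ![1, 0, 0, Complex.I * (t : ℂ)]) ∧
    -- ... and multiplies `e₁ + i t e₂` by `((ita+b)/(ita−b))·((itA−B)/(itA+B))`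
    (∃ x : Fin 4 → ℂ, γ x = Complex.I • x ∧
        φW x = ![0, 1, Complex.I * (t : ℂ), 0] ∧
        φV x =
          (((Complex.I * (t : ℂ) * (a : ℂ) + (b : ℂ)) /
              (Complex.I * (t : ℂ) * (a : ℂ) - (b : ℂ))) *
            ((Complex.I * (t : ℂ) * (A : ℂ) - (B : ℂ)) /
              (Complex.I * (t : ℂ) * (A : ℂ) + (B : ℂ)))) •
            ![0, 1, Complex.I * (t : ℂ), 0]) ∧
    -- the `B = 0` case
    (B = 0 → a ≠ 0 → b ≠ 0 → A ≠ 0 →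
      Module.finrank ℂ ↥(V ⊓ W) = 1 ∧
      ∀ l : ℂ, l ≠ -1 →
        -- `l` is an eigenvalue of `-φ(V) ∘ φ(W)⁻¹`
        (∃ x : Fin 4 → ℂ, γ x = Complex.I • x ∧ x ≠ 0 ∧ -(φV x) = l • φW x) →
        (-(1 / ((Real.pi : ℂ) * Complex.I)) * Complex.log l =
            -1 + (Module.finrank ℂ ↥(V ⊓ W) : ℂ) -
              (1 / ((Real.pi : ℂ) * Complex.I)) *
                Complex.log
                  (((b : ℂ) + Complex.I * (t : ℂ) * (a : ℂ)) /
                    ((b : ℂ) - Complex.I * (t : ℂ) * (a : ℂ))) ∧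
          -(1 / ((Real.pi : ℂ) * Complex.I)) * Complex.log l =
            -(1 / ((Real.pi : ℂ) * Complex.I)) *
              Complex.log
                (((b : ℂ) + Complex.I * (t : ℂ) * (a : ℂ)) /
                  ((b : ℂ) - Complex.I * (t : ℂ) * (a : ℂ))))) := by
  have hd := aux_den t ht a b hab
  have hD := aux_den t ht A B hAB
  have htc : (t : ℂ) ≠ 0 := by exact_mod_cast ht.ne'
  have GV := aux_graph t ht a b hab γ hγ V hV φV hφVmem hφVgraph
  have GW := aux_graph t ht A B hAB γ hγ W hW φW hφWmem hφWgraph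
  refine ⟨⟨_, aux_plus t ht γ hγ 1 0, ?_, ?_⟩, ⟨_, aux_plus t ht γ hγ 0
    ((Complex.I * t * A - B) / (Complex.I * t * A + B)), ?_, ?_⟩, ?_⟩
  · rw [GW _ (aux_plus t ht γ hγ _ _)]; simp
  · rw [GV _ (aux_plus t ht γ hγ _ _)]; simp
  · rw [GW _ (aux_plus t ht γ hγ _ _)]
    have h : (Complex.I * t * A + B) / (Complex.I * t * A - B) *
        ((Complex.I * t * A - B) / (Complex.I * t * A + B)) = 1 := by
      rw [div_mul_div_cancel₀ hD.1, div_self hD.2]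
    simp [h]
  · rw [GV _ (aux_plus t ht γ hγ _ _)]
    funext i
    fin_cases i <;> simp
    ring
  · intro hB ha hb hA
    subst hB
    have hAc : (A : ℂ) ≠ 0 := by exact_mod_cast hA
    have hbc : (b : ℂ) ≠ 0 := by exact_mod_cast hb
    have hfr : Module.finrank ℂ ↥(V ⊓ W) = 1 := by
      have : V ⊓ W = Submodule.span ℂ {(![1, 0, 0, 0] : Fin 4 → ℂ)} := by
        apply le_antisymm
        · rintro v ⟨h1, h2⟩
          simp only [SetLike.mem_coe] at h1 h2
          rw [hV, Submodule.mem_span_pair] at h1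
          rw [hW, Submodule.mem_span_pair] at h2
          obtain ⟨c, d, h1⟩ := h1
          obtain ⟨c', d', h2⟩ := h2
          have k1 := congrFun h1 2
          have k2 := congrFun h2 2
          simp at k1 k2
          have hd0 : d = 0 := by
            rw [← k2] at k1
            exact (mul_eq_zero.1 k1).resolve_right hbc
          rw [Submodule.mem_span_singleton]
          exact ⟨c, by rw [← h1, hd0]; simp⟩
        · rw [Submodule.span_singleton_le_iff_mem]
          refine ⟨?_, ?_⟩
          · rw [hV]; exact Submodule.subset_span (by simp)
          · rw [hW]; exact Submodule.subset_span (by simp)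
      rw [this]
      apply finrank_span_singleton
      intro h
      simpa using congrFun h 0
    refine ⟨hfr, ?_⟩
    rintro l hl ⟨x, hx, hx0, he⟩
    have hl' : l = ((b : ℂ) + Complex.I * t * a) / ((b : ℂ) - Complex.I * t * a) := by
      rw [GV x hx, GW x hx] at he
      have r1 : (Complex.I * t * A + (0:ℝ)) / (Complex.I * t * A - (0:ℝ)) = 1 := by
        have := hD.1
        simp only [Complex.ofReal_zero, sub_zero, add_zero] at this ⊢
        exact div_self this
      rw [r1] at he
      have k0 := congrFun he 0
      have k1 := congrFun he 1
      simp only [Pi.neg_apply, Pi.smul_apply, Matrix.cons_val_zero, Matrix.cons_val_one,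
        smul_eq_mul, one_mul] at k0 k1
      have p0 : x 0 = 0 := by
        have : (l + 1) * x 0 = 0 := by linear_combination -k0
        exact (mul_eq_zero.1 this).resolve_left (fun h => hl (eq_neg_of_add_eq_zero_left h))
      have q0 : x 1 ≠ 0 := by
        intro q0
        apply hx0
        rw [hγ] at hx
        have x2 := congrFun hx 2
        have x3 := congrFun hx 3
        simp [p0, q0] at x2 x3
        funext i
        fin_cases i
        · exact p0
        · exact q0
        · exact x2
        · exact x3
      have hk : l = -((Complex.I * t * a + b) / (Complex.I * t * a - b)) :=
        mul_right_cancel₀ q0 (by linear_combination -k1)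
      rw [hk, ← div_neg]
      congr 1 <;> ring
    rw [hfr, hl']
    constructor
    · push_cast; ring
    · rfl
end
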